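/- Let 𝓔 be an abelian category, n ≥ 1, M an n-cluster tilting subcategory of 𝓔, and let ξ : 0 → X⁰ → E¹ → E² → ⋯ → Eⁿ → X^{n+1} → 0 be an exact sequence in 𝓔 with X⁰, X^{n+1} ∈ M (the middle terms E^i arbitrary objects of 𝓔). Then there exists an n-exact sequence 0 → X⁰ → X¹ → X² → ⋯ → Xⁿ → X^{n+1} → 0 with all terms X^i in M whose Yoneda class in Extⁿ(X^{n+1},X⁰) equals [ξ]; that is, ξ is Yoneda equivalent to an n-exact sequence in M. -/

import Mathlib

open CategoryTheory CategoryTheory.Abelian CategoryTheory.Limits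

universe w v u

namespace NZPaper

variable {C : Type u} [Category.{v} C] [Abelian C] [HasExt.{w} C]

/-- A full (iso-closed) subcategory, encoded as a set of objects, is `n`-cluster tilting if it
admits monic left approximations and epic right approximations and is characterized by the
vanishing of `Ext^i` for `1 ≤ i ≤ n-1` on either side. -/
def IsNClusterTilting (n : ℕ) (M : Set C) : Prop :=
  (∀ ⦃X Y : C⦄, (X ≅ Y) → X ∈ M → Y ∈ M) ∧
  (∀ E : C, ∃ (X : C) (f : E ⟶ X), X ∈ M ∧ Mono f ∧
      ∀ X' ∈ M, ∀ g : E ⟶ X', ∃ h : X ⟶ X', f ≫ h = g) ∧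
  (∀ E : C, ∃ (X : C) (f : X ⟶ E), X ∈ M ∧ Epi f ∧
      ∀ X' ∈ M, ∀ g : X' ⟶ E, ∃ h : X' ⟶ X, h ≫ f = g) ∧
  (∀ E : C, E ∈ M ↔ ∀ Y ∈ M, ∀ i : ℕ, 1 ≤ i → i < n → ∀ e : Ext E Y i, e = 0) ∧
  (∀ E : C, E ∈ M ↔ ∀ Y ∈ M, ∀ i : ℕ, 1 ≤ i → i < n → ∀ e : Ext Y E i, e = 0)

/-- An `nℤ`-cluster tilting subcategory: in addition `Ext^k` vanishes on `M` for every
`k ≥ 1` not divisible by `n`. -/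
def IsNZClusterTilting (n : ℕ) (M : Set C) : Prop :=
  IsNClusterTilting n M ∧
  ∀ X ∈ M, ∀ Y ∈ M, ∀ k : ℕ, 1 ≤ k → ¬ (n ∣ k) → ∀ e : Ext X Y k, e = 0

/-- An exact sequence `0 → Y 0 → Y 1 → ⋯ → Y m → Y (m+1) → 0` in an abelian category,
recorded together with its canonical splicing into short exact sequences
`0 → K i → Y (i+1) → K (i+1) → 0` (`K i` is the image of `d i` for `1 ≤ i ≤ m`,
`K 0 = Y 0` and `K m = Y (m+1)`).  Only the indices `0, …, m+1` (resp. `0, …, m`) of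
`Y` (resp. of the differentials and of `K`) are relevant; the remaining values are junk
(any such exact sequence can be padded by zero objects). -/
structure ExactExtension (C : Type u) [Category.{v} C] [Abelian C] (m : ℕ) where
  Y : ℕ → C
  d : ∀ i, Y i ⟶ Y (i + 1)
  K : ℕ → C
  ι : ∀ i, K i ⟶ Y (i + 1)
  π : ∀ i, Y i ⟶ K i
  hK0 : K 0 = Y 0
  hKm : K m = Y (m + 1)
  zero : ∀ i, ι i ≫ π (i + 1) = 0
  shortExact : ∀ i, (ShortComplex.mk (ι i) (π (i + 1)) (zero i)).ShortExact
  d0_eq : eqToHom hK0 ≫ d 0 = ι 0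
  dmid_eq : ∀ i, 1 ≤ i → i + 1 ≤ m → d i = π i ≫ ι i
  dlast_eq : d m = π m ≫ eqToHom hKm

/-- The Yoneda class of the chain of the first `j` short exact sequences,
obtained as the Yoneda composite of their `Ext¹`-classes. -/
noncomputable def ExactExtension.chainClass {m : ℕ} (T : ExactExtension C m) :
    ∀ j : ℕ, Ext (T.K j) (T.K 0) j
  | 0 => Ext.mk₀ (𝟙 _)
  | (j + 1) => ((T.shortExact j).extClass).comp (T.chainClass j) (by omega)

/-- The Yoneda class `[ξ] ∈ Ext^m (Y (m+1)) (Y 0)` of the exact sequence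
`0 → Y 0 → ⋯ → Y (m+1) → 0`, i.e. the Yoneda composite of the `Ext¹`-classes of the
short exact sequences obtained by splicing it at its images. -/
noncomputable def ExactExtension.extClass {m : ℕ} (T : ExactExtension C m) :
    Ext (T.Y (m + 1)) (T.Y 0) m :=
  (Ext.mk₀ (eqToHom T.hKm.symm)).comp
    ((T.chainClass m).comp (Ext.mk₀ (eqToHom T.hK0)) (add_zero m)) (zero_add m)

/-- Transport of an `Ext`-class along equalities of objects. -/
noncomputable def extTransport {X X' Z Z' : C} {a : ℕ} (e : Ext X Z a)
    (hX : X = X') (hZ : Z = Z') : Ext X' Z' a :=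
  (Ext.mk₀ (eqToHom hX.symm)).comp (e.comp (Ext.mk₀ (eqToHom hZ)) (add_zero a)) (zero_add a)

/-- Exactness, at every spot, of the long sequence of abelian groups
`0 → Hom(X,Y⁰) → ⋯ → Hom(X,Y^{n+1}) → Extⁿ(X,Y⁰) → ⋯ → Extⁿ(X,Y^{n+1}) → Ext^{2n}(X,Y⁰) → ⋯`
(`Ext⁰ = Hom`), where within each row the maps are induced by the differentials of `T` and each
connecting map `Ext^{kn}(X,Y^{n+1}) → Ext^{(k+1)n}(X,Y⁰)` is Yoneda composition with the class
`[T] ∈ Extⁿ(Y^{n+1},Y⁰)`. -/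
def CovLES (n : ℕ) (X : C) (T : ExactExtension C n) : Prop :=
  (Function.Injective fun e : Ext X (T.Y 0) 0 => e.comp (Ext.mk₀ (T.d 0)) (add_zero 0)) ∧
  (∀ k i : ℕ, i < n → Function.Exact
      (fun e : Ext X (T.Y i) (k * n) => e.comp (Ext.mk₀ (T.d i)) (add_zero _))
      (fun e : Ext X (T.Y (i + 1)) (k * n) => e.comp (Ext.mk₀ (T.d (i + 1))) (add_zero _))) ∧
  (∀ k : ℕ, Function.Exact
      (fun e : Ext X (T.Y n) (k * n) => e.comp (Ext.mk₀ (T.d n)) (add_zero _))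
      (fun e : Ext X (T.Y (n + 1)) (k * n) =>
        e.comp T.extClass (show k * n + n = (k + 1) * n by ring))) ∧
  (∀ k : ℕ, Function.Exact
      (fun e : Ext X (T.Y (n + 1)) (k * n) =>
        e.comp T.extClass (show k * n + n = (k + 1) * n by ring))
      (fun e : Ext X (T.Y 0) ((k + 1) * n) => e.comp (Ext.mk₀ (T.d 0)) (add_zero _)))

/-- Exactness, at every spot, of the long sequence of abelian groups
`0 → Hom(Y^{n+1},Z) → ⋯ → Hom(Y⁰,Z) → Extⁿ(Y^{n+1},Z) → ⋯ → Extⁿ(Y⁰,Z) → Ext^{2n}(Y^{n+1},Z) → ⋯`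
(`Ext⁰ = Hom`), where within each row the maps are induced by the differentials of `T` and each
connecting map `Ext^{kn}(Y⁰,Z) → Ext^{(k+1)n}(Y^{n+1},Z)` is Yoneda precomposition with the class
`[T] ∈ Extⁿ(Y^{n+1},Y⁰)`. -/
def ContraLES (n : ℕ) (Z : C) (T : ExactExtension C n) : Prop :=
  (Function.Injective fun e : Ext (T.Y (n + 1)) Z 0 => (Ext.mk₀ (T.d n)).comp e (zero_add 0)) ∧
  (∀ k i : ℕ, i < n → Function.Exact
      (fun e : Ext (T.Y (i + 2)) Z (k * n) => (Ext.mk₀ (T.d (i + 1))).comp e (zero_add _))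
      (fun e : Ext (T.Y (i + 1)) Z (k * n) => (Ext.mk₀ (T.d i)).comp e (zero_add _))) ∧
  (∀ k : ℕ, Function.Exact
      (fun e : Ext (T.Y 1) Z (k * n) => (Ext.mk₀ (T.d 0)).comp e (zero_add _))
      (fun e : Ext (T.Y 0) Z (k * n) =>
        T.extClass.comp e (show n + k * n = (k + 1) * n by ring))) ∧
  (∀ k : ℕ, Function.Exact
      (fun e : Ext (T.Y 0) Z (k * n) =>
        T.extClass.comp e (show n + k * n = (k + 1) * n by ring))
      (fun e : Ext (T.Y (n + 1)) Z ((k + 1) * n) => (Ext.mk₀ (T.d n)).comp e (zero_add _)))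

end NZPaper

namespace NZPaper

section Helpers

variable {C : Type u} [Category.{v} C] [Abelian C] [HasExt.{w} C]

/-- Pushout of a short exact sequence. -/
lemma exists_pushout_ses {S : ShortComplex C} (hS : S.ShortExact) {A : C} (f : S.X₁ ⟶ A) :
    ∃ (E : C) (i : A ⟶ E) (p : E ⟶ S.X₃) (w : i ≫ p = 0)
      (h : (ShortComplex.mk i p w).ShortExact),
      h.extClass = hS.extClass.comp (Ext.mk₀ f) (add_zero 1) := by
  have := hS.mono_f
  have := hS.epi_g
  have wd : f ≫ (0 : A ⟶ S.X₃) = S.f ≫ S.g := by simp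
  have w : (pushout.inl f S.f) ≫ pushout.desc (0 : A ⟶ S.X₃) S.g wd = 0 := pushout.inl_desc _ _ _
  have he : Epi (pushout.desc (0 : A ⟶ S.X₃) S.g wd) :=
    epi_of_epi_fac (pushout.inr_desc (0 : A ⟶ S.X₃) S.g wd)
  have hex : (ShortComplex.mk _ _ w).Exact := by
    apply ShortComplex.exact_of_g_is_cokernel
    refine CokernelCofork.IsColimit.ofπ _ _
      (fun {W} k hk => hS.exact.desc (pushout.inr f S.f ≫ k) ?_) ?_ ?_
    · rw [← pushout.condition_assoc, hk, comp_zero]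
    · intro W k hk
      apply pushout.hom_ext
      · rw [← Category.assoc, pushout.inl_desc, zero_comp]
        exact hk.symm
      · rw [← Category.assoc, pushout.inr_desc, hS.exact.g_desc]
    · intro W k hk m hm
      rw [← cancel_epi (pushout.desc (0 : A ⟶ S.X₃) S.g wd), hm]
      apply pushout.hom_ext
      · rw [← Category.assoc, pushout.inl_desc, zero_comp]
        exact hk
      · rw [← Category.assoc, pushout.inr_desc, hS.exact.g_desc]
  have h : (ShortComplex.mk _ _ w).ShortExact :=
    { exact := hex
      mono_f := inferInstanceAs (Mono (pushout.inl f S.f))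
      epi_g := he }
  refine ⟨_, _, _, w, h, ?_⟩
  let φ : S ⟶ ShortComplex.mk _ _ w :=
    { τ₁ := f, τ₂ := pushout.inr f S.f, τ₃ := 𝟙 _
      comm₁₂ := pushout.condition
      comm₂₃ := (pushout.inr_desc _ _ _).trans (Category.comp_id _).symm }
  have := ShortComplex.ShortExact.extClass_naturality hS h φ
  simp only [φ, Ext.mk₀_id_comp] at this
  exact this.symm

lemma ses_of_mono {A X : C} (f : A ⟶ X) [Mono f] :
    (ShortComplex.mk f (cokernel.π f) (cokernel.condition f)).ShortExact :=
  { exact := ShortComplex.exact_cokernel f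
    mono_f := inferInstanceAs (Mono f)
    epi_g := inferInstanceAs (Epi (cokernel.π f)) }

lemma ses_of_epi {A X : C} (f : X ⟶ A) [Epi f] :
    (ShortComplex.mk (kernel.ι f) f (kernel.condition f)).ShortExact :=
  { exact := ShortComplex.exact_kernel f
    mono_f := inferInstanceAs (Mono (kernel.ι f))
    epi_g := inferInstanceAs (Epi f) }

lemma ext_vanish {n : ℕ} {M : Set C} (hM : IsNClusterTilting n M) {X Y : C} (hX : X ∈ M)
    (hY : Y ∈ M) {i : ℕ} (h1 : 1 ≤ i) (h2 : i < n) (e : Ext X Y i) : e = 0 :=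
  (hM.2.2.2.1 X).1 hX Y hY i h1 h2 e

/-- First pass. -/
lemma pass_one {n : ℕ} {M : Set C} (hM : IsNClusterTilting n M) {B : C} (hB : B ∈ M) :
    ∀ (k : ℕ), k + 1 ≤ n → ∀ (K X' : C) (f : K ⟶ X') (_ : Mono f) (_ : X' ∈ M)
      (η : Ext B K (k + 1)) (_ : η.comp (Ext.mk₀ f) (add_zero _) = 0),
      ∃ (X : C) (p : X ⟶ B), X ∈ M ∧ Epi p ∧ (Ext.mk₀ p).comp η (zero_add _) = 0 ∧
        ∀ Y ∈ M, ∀ g : Y ⟶ B, (Ext.mk₀ g).comp η (zero_add _) = 0 → ∃ h : Y ⟶ X, h ≫ p = g := by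
  intro k
  induction k with
  | zero =>
    intro hk K X' f _ hX' η hη
    have hS := ses_of_mono f
    obtain ⟨x, hx⟩ := Ext.covariant_sequence_exact₁ B hS η hη (n₀ := 0) (by omega)
    obtain ⟨q, rfl⟩ := Ext.mk₀_bijective _ _ |>.2 x
    obtain ⟨X, a, hX, ha, hlift⟩ := hM.2.2.1 (pullback (cokernel.π f) q)
    refine ⟨X, a ≫ pullback.snd _ _, hX, epi_comp _ _, ?_, ?_⟩
    · rw [← hx]
      rw [Ext.mk₀_comp_mk₀_assoc, Category.assoc, ← pullback.condition, ← Category.assoc,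
        ← Ext.mk₀_comp_mk₀_assoc]
      have := hS.comp_extClass
      dsimp only at this
      rw [this, Ext.comp_zero]
    · intro Y hY g hg
      rw [← hx, Ext.mk₀_comp_mk₀_assoc] at hg
      obtain ⟨z, hz⟩ := Ext.covariant_sequence_exact₃ Y hS _ _ hg
      obtain ⟨z, rfl⟩ := Ext.mk₀_bijective _ _ |>.2 z
      rw [Ext.mk₀_comp_mk₀] at hz
      have hz' := (Ext.mk₀_bijective _ _).1 hz
      obtain ⟨h, hh⟩ := hlift Y hY (pullback.lift z g hz')
      exact ⟨h, by rw [← Category.assoc, hh, pullback.lift_snd]⟩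
  | succ k ih =>
    intro hk K X' f _ hX' η hη
    have hS := ses_of_mono f
    obtain ⟨x, hx⟩ := Ext.covariant_sequence_exact₁ B hS η hη (n₀ := k + 1) (by omega)
    obtain ⟨X'', f'', hX'', hm, -⟩ := hM.2.1 (cokernel f)
    obtain ⟨X, p, hX, hp, hk, hl⟩ := ih (by omega) _ X'' f'' hm hX'' x
      (ext_vanish hM hB hX'' (by omega) (by omega) _)
    refine ⟨X, p, hX, hp, ?_, ?_⟩
    · rw [← hx, ← Ext.comp_assoc (a₁₂ := k + 1) _ _ _ (by omega) (by omega) (by omega), hk,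
        Ext.zero_comp]
    · intro Y hY g hg
      apply hl Y hY g
      rw [← hx, ← Ext.comp_assoc (a₁₂ := k + 1) _ _ _ (by omega) (by omega) (by omega)] at hg
      obtain ⟨z, hz⟩ := Ext.covariant_sequence_exact₃ Y hS _ _ hg
      rw [← hz, ext_vanish hM hY hX' (by omega) (by omega) z, Ext.zero_comp]

variable (C) in
/-- An infinite chain of short exact sequences. -/
structure Chain where
  K : ℕ → C
  Y : ℕ → C
  f : ∀ i, K i ⟶ Y i
  g : ∀ i, Y i ⟶ K (i + 1)
  w : ∀ i, f i ≫ g i = 0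
  ses : ∀ i, (ShortComplex.mk (f i) (g i) (w i)).ShortExact

/-- class of a chain -/
noncomputable def Chain.cls (c : Chain C) : ∀ j : ℕ, Ext (c.K j) (c.K 0) j
  | 0 => Ext.mk₀ (𝟙 _)
  | (j + 1) => ((c.ses j).extClass).comp (c.cls j) (by omega)

/-- Prepend a short exact sequence. -/
def Chain.cons (c : Chain C) {A X : C} (f : A ⟶ X) (g : X ⟶ c.K 0) (w : f ≫ g = 0)
    (h : (ShortComplex.mk f g w).ShortExact) : Chain C where
  K := fun i => match i with | 0 => A | i + 1 => c.K i
  Y := fun i => match i with | 0 => X | i + 1 => c.Y i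
  f := fun i => match i with | 0 => f | i + 1 => c.f i
  g := fun i => match i with | 0 => g | i + 1 => c.g i
  w := fun i => match i with | 0 => w | i + 1 => c.w i
  ses := fun i => match i with | 0 => h | i + 1 => c.ses i

lemma Chain.cons_cls (c : Chain C) {A X : C} (f : A ⟶ X) (g : X ⟶ c.K 0) (w : f ≫ g = 0)
    (h : (ShortComplex.mk f g w).ShortExact) (j : ℕ) :
    (c.cons f g w h).cls (j + 1) = (c.cls j).comp h.extClass rfl := by
  induction j with
  | zero =>
    change Ext.comp h.extClass (Ext.mk₀ (𝟙 A)) _ = Ext.comp (Ext.mk₀ (𝟙 (c.K 0))) h.extClass _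
    rw [Ext.comp_mk₀_id, Ext.mk₀_id_comp]
  | succ j ih =>
    change Ext.comp (c.ses j).extClass ((c.cons f g w h).cls (j + 1)) _ =
      Ext.comp (Ext.comp (c.ses j).extClass (c.cls j) _) h.extClass _
    rw [ih]
    exact (Ext.comp_assoc _ _ _ _ _ (by omega)).symm

open ZeroObject in
/-- The trivial chain on an object. -/
noncomputable def Chain.triv (B : C) : Chain C where
  K := fun i => match i with | 0 => B | _ + 1 => 0
  Y := fun i => match i with | 0 => B | _ + 1 => 0
  f := fun i => match i with | 0 => 𝟙 B | _ + 1 => 0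
  g := fun _ => 0
  w := fun _ => comp_zero
  ses := fun i => match i with
    | 0 => { exact := (ShortComplex.exact_iff_epi _ rfl).2 (inferInstanceAs (Epi (𝟙 B)))
             mono_f := inferInstanceAs (Mono (𝟙 B))
             epi_g := ⟨fun _ _ _ => (isZero_zero C).eq_of_src _ _⟩ }
    | _ + 1 => { exact := ShortComplex.exact_of_isZero_X₂ _ (isZero_zero C)
                 mono_f := ⟨fun _ _ _ => (isZero_zero C).eq_of_tgt _ _⟩
                 epi_g := ⟨fun _ _ _ => (isZero_zero C).eq_of_src _ _⟩ }

/-- The chain ends trivially at index `n`. -/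
def Chain.EndsAt (c : Chain C) (n : ℕ) : Prop :=
  ∃ h : c.K n = c.Y n, c.f n = eqToHom h

/-- Convert a chain to an exact extension. -/
def Chain.toExt (c : Chain C) (n : ℕ) (h : c.K (n + 1) = c.Y (n + 1))
    (hf : c.f (n + 1) = eqToHom h) : ExactExtension C (n + 1) where
  Y := fun i => match i with | 0 => c.K 0 | i + 1 => c.Y i
  d := fun i => match i with | 0 => c.f 0 | i + 1 => c.g i ≫ c.f (i + 1)
  K := c.K
  ι := c.f
  π := fun i => match i with | 0 => 𝟙 _ | i + 1 => c.g i
  hK0 := rfl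
  hKm := h
  zero := c.w
  shortExact := c.ses
  d0_eq := by simp
  dmid_eq := fun i hi _ => by
    obtain ⟨i, rfl⟩ : ∃ k, i = k + 1 := ⟨i - 1, by omega⟩
    rfl
  dlast_eq := by
    change c.g n ≫ c.f (n + 1) = _
    rw [hf]

lemma Chain.toExt_chainClass (c : Chain C) (n : ℕ) (h : c.K (n + 1) = c.Y (n + 1))
    (hf : c.f (n + 1) = eqToHom h) (j : ℕ) : (c.toExt n h hf).chainClass j = c.cls j := by
  induction j with
  | zero => rfl
  | succ j ih =>
    change Ext.comp (c.ses j).extClass ((c.toExt n h hf).chainClass j) _ =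
      Ext.comp (c.ses j).extClass (c.cls j) _
    rw [ih]
    rfl

/-- The running condition in the second pass. -/
def Good (n : ℕ) (M : Set C) {K A : C} {r : ℕ} (η : Ext K A r) : Prop :=
  ∀ Y ∈ M, ∀ i : ℕ, 1 ≤ i → i < n → ∀ x : Ext Y K i,
    (∀ h : i + r = n, x.comp η h = 0) → x = 0

lemma step {n : ℕ} {M : Set C} (hM : IsNClusterTilting n M) {K A X : C} {r : ℕ}
    (hr : r + 1 ≤ n)
    (η : Ext K A (r + 1)) (hη : Good n M η) (p : X ⟶ K) [Epi p] (hX : X ∈ M)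
    (hp : (Ext.mk₀ p).comp η (zero_add _) = 0)
    (hl : ∀ Y ∈ M, ∀ g : Y ⟶ K, (r + 1 = n → (Ext.mk₀ g).comp η (zero_add _) = 0) →
      ∃ h : Y ⟶ X, h ≫ p = g) :
    ∃ η' : Ext (kernel p) A r, (ses_of_epi p).extClass.comp η' (by omega) = η ∧ Good n M η' := by
  obtain ⟨η', h'⟩ := Ext.contravariant_sequence_exact₃ (ses_of_epi p) A η hp (n₀ := r) (by omega)
  refine ⟨η', h', ?_⟩
  intro Y hY i hi hin x hx
  obtain ⟨i, rfl⟩ : ∃ k, i = k + 1 := ⟨i - 1, by omega⟩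
  obtain ⟨z, hz⟩ := Ext.covariant_sequence_exact₁ Y (ses_of_epi p) x
    (ext_vanish hM hY hX hi hin _) (n₀ := i) rfl
  have key : ∀ h : i + (r + 1) = n, z.comp η h = 0 := by
    intro h
    have := hx (by omega)
    rw [← hz, Ext.comp_assoc (a₂₃ := r + 1) _ _ _ (by omega) (by omega) (by omega)] at this
    rw [← h']
    exact this
  rcases Nat.eq_zero_or_pos i with rfl | hi'
  · obtain ⟨g, rfl⟩ := Ext.mk₀_bijective _ _ |>.2 z
    obtain ⟨h, rfl⟩ := hl Y hY g (by
      rintro rfl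
      exact key (by omega))
    rw [← hz, ← Ext.mk₀_comp_mk₀,
      Ext.comp_assoc (a₂₃ := 1) _ _ _ (by omega) (by omega) (by omega)]
    have := (ses_of_epi p).comp_extClass
    dsimp only at this
    rw [this, Ext.comp_zero]
  · rw [← hz, hη Y hY i hi' (by omega) z key, Ext.zero_comp]

lemma pass_two {n : ℕ} {M : Set C} (hM : IsNClusterTilting n M) {A : C} (hA : A ∈ M) :
    ∀ (r : ℕ), r + 1 < n → ∀ (c : Chain C) (j : ℕ), j + (r + 1) = n → c.EndsAt j →
      (∀ i ≤ j, c.Y i ∈ M) → ∀ (η : Ext (c.K 0) A (r + 1)), Good n M η →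
      ∀ (θ : Ext (c.K j) A n) (hn : j + (r + 1) = n), (c.cls j).comp η hn = θ →
      ∃ (c' : Chain C) (hB : c'.K n = c.K j) (h0 : c'.K 0 = A),
        c'.EndsAt n ∧ (∀ i ≤ n, c'.Y i ∈ M) ∧ extTransport (c'.cls n) hB h0 = θ := by
  intro r
  induction r with
  | zero =>
    intro hr c j hj hc hcM η hη θ hn hθ
    obtain ⟨X, p, hX, _, -⟩ := hM.2.2.1 (c.K 0)
    obtain ⟨x, hx⟩ := Ext.contravariant_sequence_exact₃ (ses_of_epi p) A η
      (ext_vanish hM hX hA (by omega) (by omega) _) (n₀ := 0) (by omega)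
    obtain ⟨f, rfl⟩ := Ext.mk₀_bijective _ _ |>.2 x
    obtain ⟨E, i, q, w, h, hcl⟩ := exists_pushout_ses (ses_of_epi p) f
    replace hcl : h.extClass = η := hcl.trans hx
    subst hcl
    have hE : E ∈ M := by
      refine (hM.2.2.2.2 E).2 fun Y hY k hk1 hk2 e => ?_
      have h2 : e.comp (Ext.mk₀ q) (add_zero k) = 0 := by
        refine hη Y hY k hk1 hk2 _ fun hh => ?_
        rw [Ext.comp_assoc (a₂₃ := 1) _ _ _ (by omega) (by omega) (by omega)]
        have := h.comp_extClass
        dsimp only at this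
        rw [this, Ext.comp_zero]
      obtain ⟨y, rfl⟩ := Ext.covariant_sequence_exact₂ Y h e h2
      rw [ext_vanish hM hY hA hk1 hk2 y, Ext.zero_comp]
    obtain rfl : j + 1 = n := hn
    refine ⟨c.cons i q w h, rfl, rfl, hc, ?_, ?_⟩
    · rintro (_ | k) hk
      · exact hE
      · exact hcM k (by omega)
    · rw [Chain.cons_cls, ← hθ]
      unfold extTransport
      simp only [eqToHom_refl]
      exact (Ext.mk₀_id_comp _).trans (Ext.comp_mk₀_id _)
  | succ r ih =>
    intro hr c j hj hc hcM η hη θ hn hθ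
    obtain ⟨X, p, hX, _, hl⟩ := hM.2.2.1 (c.K 0)
    obtain ⟨η', hη', hG⟩ := step hM (by omega) η hη p hX
      (ext_vanish hM hX hA (by omega) (by omega) _) (fun Y hY g _ => hl Y hY g)
    refine ih (by omega) (c.cons _ p _ (ses_of_epi p)) (j + 1) (by omega) hc ?_ η' hG θ
      (by omega) ?_
    · rintro (_ | k) hk
      · exact hX
      · exact hcM k (by omega)
    · rw [Chain.cons_cls, ← hθ, ← hη']
      exact Ext.comp_assoc _ _ _ _ _ (by omega)

lemma extTransport_refl {X Z : C} {a : ℕ} (e : Ext X Z a) : extTransport e rfl rfl = e := by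
  unfold extTransport
  simp only [eqToHom_refl]
  exact (Ext.mk₀_id_comp _).trans (Ext.comp_mk₀_id _)

lemma extTransport_trans {X X' X'' Z Z' Z'' : C} {a : ℕ} (e : Ext X Z a) (h : X = X')
    (h' : X' = X'') (k : Z = Z') (k' : Z' = Z'') :
    extTransport (extTransport e h k) h' k' = extTransport e (h.trans h') (k.trans k') := by
  subst h h' k k'
  simp only [extTransport_refl]

lemma extClass_eq {m : ℕ} (T : ExactExtension C m) :
    T.extClass = extTransport (T.chainClass m) T.hKm T.hK0 := rfl

lemma chainClass_kill {m : ℕ} (T : ExactExtension C m) (j : ℕ) :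
    (T.chainClass (j + 1)).comp (Ext.mk₀ (T.ι 0)) (add_zero _) = 0 := by
  induction j with
  | zero =>
    change Ext.comp (Ext.comp (T.shortExact 0).extClass (Ext.mk₀ (𝟙 _)) _) _ _ = 0
    rw [Ext.comp_mk₀_id]
    exact (T.shortExact 0).extClass_comp
  | succ j ih =>
    change Ext.comp (Ext.comp (T.shortExact (j + 1)).extClass (T.chainClass (j + 1)) _) _ _ = 0
    rw [Ext.comp_assoc_of_third_deg_zero, ih, Ext.comp_zero]

lemma extTransport_kill {X X' Z Z' W : C} {a : ℕ} (e : Ext X Z a) (h : X = X')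
    (k : Z = Z') (f : Z ⟶ W) (hf : e.comp (Ext.mk₀ f) (add_zero _) = 0) :
    (extTransport e h k).comp (Ext.mk₀ (eqToHom k.symm ≫ f)) (add_zero _) = 0 := by
  subst h k
  rw [extTransport_refl]
  simpa using hf

/-- Main construction in terms of classes. -/
lemma main_class {n : ℕ} {M : Set C} (hM : IsNClusterTilting (n + 2) M) {A B : C} (hA : A ∈ M)
    (hB : B ∈ M) (ξ : Ext B A (n + 2)) {E : C} (f : A ⟶ E) [Mono f]
    (hf : ξ.comp (Ext.mk₀ f) (add_zero _) = 0) :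
    ∃ (c' : Chain C) (hB : c'.K (n + 2) = B) (h0 : c'.K 0 = A),
        c'.EndsAt (n + 2) ∧ (∀ i ≤ n + 2, c'.Y i ∈ M) ∧ extTransport (c'.cls (n + 2)) hB h0 = ξ := by
  obtain ⟨X', f', hX', _, -⟩ := hM.2.1 E
  obtain ⟨X, p, hX, _, hp, hl⟩ := pass_one hM hB (n + 1) le_rfl A X' (f ≫ f') (mono_comp _ _) hX' ξ
    (by rw [← Ext.mk₀_comp_mk₀, ← Ext.comp_assoc_of_third_deg_zero, hf, Ext.zero_comp])
  obtain ⟨η', hη', hG⟩ := step hM le_rfl ξ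
    (fun Y hY i h1 h2 x _ => ext_vanish hM hY hB h1 h2 x) p hX hp
    (fun Y hY g hg => hl Y hY g (hg rfl))
  refine pass_two hM hA n (by omega) ((Chain.triv B).cons _ p _ (ses_of_epi p)) 1 (by omega)
    ⟨rfl, rfl⟩ ?_ η' hG ξ (by omega) ?_
  · rintro (_ | _ | k) hk
    · exact hX
    · exact hB
    · omega
  · refine Eq.trans ?_ hη'
    refine congrArg (fun e => Ext.comp e η' _)
      ((Chain.cons_cls (Chain.triv B) _ p _ (ses_of_epi p) 0).trans ?_)
    exact Ext.mk₀_id_comp _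

end Helpers

/-- Let `𝓔` be an abelian category, `n ≥ 1`, `M` an `n`-cluster tilting
subcategory of `𝓔`, and `ξ : 0 → X⁰ → E¹ → ⋯ → Eⁿ → X^{n+1} → 0` an exact sequence in `𝓔`
with `X⁰, X^{n+1} ∈ M` (middle terms arbitrary).  Then there is an `n`-exact sequence
`0 → X⁰ → X¹ → ⋯ → Xⁿ → X^{n+1} → 0` with all terms in `M` whose Yoneda class in
`Extⁿ(X^{n+1},X⁰)` equals `[ξ]`. -/
theorem exists_n_exact_yoneda_equivalent
    {C : Type u} [Category.{v} C] [Abelian C] [HasExt.{w} C]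
    (n : ℕ) (hn : 1 ≤ n) (M : Set C) (hM : IsNClusterTilting n M)
    (S : ExactExtension C n) (h0 : S.Y 0 ∈ M) (h1 : S.Y (n + 1) ∈ M) :
    ∃ (T : ExactExtension C n) (e0 : T.Y 0 = S.Y 0) (e1 : T.Y (n + 1) = S.Y (n + 1)),
      (∀ i ≤ n + 1, T.Y i ∈ M) ∧ extTransport T.extClass e1 e0 = S.extClass := by
  obtain _ | _ | n := n
  · omega
  · refine ⟨S, rfl, rfl, fun i _ => ?_, extTransport_refl _⟩
    exact (hM.2.2.2.1 _).2 fun Y _ i h1 h2 => by omega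
  · have hmono : Mono (S.ι 0) := (S.shortExact 0).mono_f
    obtain ⟨c, hB, hA, ⟨he, hf⟩, hcM, hcl⟩ := main_class hM h0 h1 S.extClass
      (eqToHom S.hK0.symm ≫ S.ι 0)
      (extTransport_kill _ S.hKm S.hK0 _ (chainClass_kill S (n + 1)))
    refine ⟨c.toExt (n + 1) he hf, hA, he.symm.trans hB, ?_, ?_⟩
    · rintro (_ | i) hi
      · change c.K 0 ∈ M
        rw [hA]
        exact h0
      · exact hcM i (by omega)
    · refine Eq.trans ?_ hcl
      refine (extTransport_trans _ (c.toExt (n + 1) he hf).hKm _ _ _).trans ?_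
      exact congrArg (fun e => extTransport e hB hA) (Chain.toExt_chainClass c (n + 1) he hf _)

end NZPaper
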